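/- arXiv:2206.04740 — 4 statements merged into one kernel-verified Lean document; each statement's English description precedes it below -/
import Mathlib

section
/- Let d ≥ 2, let w ∈ EuclideanSpace ℝ (Fin d), let b ∈ ℝ, and define the classifier h(z) = 1 if ⟪w, z⟫ + b ≥ 0 and h(z) = -1 otherwise. Assume there exists a coordinate i ≠ d with w i ≠ 0. Then there exists a responsive pair with respect to coordinate d — i.e., there exist x, x' ∈ EuclideanSpace ℝ (Fin d) with x i = x' i for all i ≠ d, x d = 0, x' d = 1 and h(x) ≠ h(x') — if and only if the d-th coordinate of w is nonzero. -/
open RealInnerProductSpace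

theorem responsive_pair_exists_iff_weight_nonzero
    {d : ℕ} (hd : 2 ≤ d)
    (w : EuclideanSpace ℝ (Fin d)) (b : ℝ)
    (h : EuclideanSpace ℝ (Fin d) → ℤ)
    (hh : ∀ z, h z = if 0 ≤ ⟪w, z⟫ + b then 1 else -1)
    (j : Fin d)  -- the feature of interest (the "d-th" coordinate)
    (hother : ∃ i : Fin d, i ≠ j ∧ w i ≠ 0) :
    (∃ x x' : EuclideanSpace ℝ (Fin d),
        (∀ i : Fin d, i ≠ j → x i = x' i) ∧ x j = 0 ∧ x' j = 1 ∧ h x ≠ h x')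
      ↔ w j ≠ 0 := by
  constructor
  · rintro ⟨x, x', hx, h0, h1, hne⟩ hw
    apply hne
    have key : ⟪w, x⟫ = ⟪w, x'⟫ := by
      simp only [PiLp.inner_apply]
      refine Finset.sum_congr rfl fun i _ => ?_
      by_cases hi : i = j
      · subst hi
        simp [hw]
      · rw [hx i hi]
    rw [hh, hh, key]
  · intro hw
    obtain ⟨i, hij, hi⟩ := hother
    have e1 : ∀ t : ℝ, ⟪w, EuclideanSpace.single i t⟫ = t * w i := by
      intro t
      simp [EuclideanSpace.inner_single_right]
    have e2 : ∀ t : ℝ, ⟪w, EuclideanSpace.single i t + EuclideanSpace.single j (1 : ℝ)⟫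
        = t * w i + w j := by
      intro t
      simp [inner_add_right, EuclideanSpace.inner_single_right]
    have main : ∃ t : ℝ, h (EuclideanSpace.single i t) ≠
        h (EuclideanSpace.single i t + EuclideanSpace.single j (1 : ℝ)) := by
      rcases lt_or_gt_of_ne hw with hlt | hgt
      · refine ⟨-b / w i, ?_⟩
        rw [hh, hh, e1, e2, div_mul_cancel₀ _ hi, if_pos (by linarith), if_neg (by linarith)]
        norm_num
      · refine ⟨(-b - w j) / w i, ?_⟩
        rw [hh, hh, e1, e2, div_mul_cancel₀ _ hi, if_neg (by linarith), if_pos (by linarith)]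
        norm_num
    obtain ⟨t, ht⟩ := main
    refine ⟨_, _, ?_, ?_, ?_, ht⟩
    · intro k hk
      simp [hk]
    · simp [hij.symm]
    · simp [hij.symm]
end

section
/- Let n ≥ 1, let w ∈ EuclideanSpace ℝ (Fin n) with ‖w‖ = 1, let b ∈ ℝ, let t ≥ 0 and r > 0. Then the Lebesgue measure (volume) of the set {x ∈ EuclideanSpace ℝ (Fin n) : ‖x‖ ≤ r ∧ b ≤ ⟪w, x⟫ ∧ ⟪w, x⟫ < b + t} is at most (2r)^(n-1) · t. -/
open RealInnerProductSpace MeasureTheory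

theorem slab_ball_intersection_volume_bound
    {n : ℕ} (hn : 1 ≤ n)
    (w : EuclideanSpace ℝ (Fin n)) (hw : ‖w‖ = 1)
    (b t r : ℝ) (ht : 0 ≤ t) (hr : 0 < r) :
    volume {x : EuclideanSpace ℝ (Fin n) | ‖x‖ ≤ r ∧ b ≤ ⟪w, x⟫ ∧ ⟪w, x⟫ < b + t}
      ≤ ENNReal.ofReal ((2 * r) ^ (n - 1) * t) := by
  obtain ⟨m, rfl⟩ : ∃ m, n = m + 1 := ⟨n - 1, by omega⟩
  have hv : Orthonormal ℝ (({0} : Set (Fin (m + 1))).domRestrict (fun _ => w)) := by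
    refine ⟨fun i => hw, fun i j hij => ?_⟩
    exact absurd (Subsingleton.elim i j) hij
  obtain ⟨e, he⟩ := hv.exists_orthonormalBasis_extension_of_card_eq (by simp)
  have he0 : e 0 = w := he 0 rfl
  have hmp := (PiLp.volume_preserving_ofLp (Fin (m + 1))).comp e.measurePreserving_repr
  let B : Fin (m + 1) → Set ℝ :=
    Fin.cons (Set.Ico b (b + t)) (fun _ => Set.Icc (-r) r)
  have hB : MeasurableSet (Set.univ.pi B) := by
    refine MeasurableSet.univ_pi fun i => ?_
    refine Fin.cases ?_ (fun j => ?_) i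
    · exact measurableSet_Ico
    · exact measurableSet_Icc
  have hvol : volume (Set.univ.pi B) = ENNReal.ofReal ((2 * r) ^ (m + 1 - 1) * t) := by
    rw [volume_pi_pi, Fin.prod_univ_succ]
    simp only [B, Fin.cons_zero, Fin.cons_succ, Real.volume_Ico, Real.volume_Icc,
      Finset.prod_const, Finset.card_univ, Fintype.card_fin, Nat.add_sub_cancel]
    rw [ENNReal.ofReal_mul (by positivity), ENNReal.ofReal_pow (by positivity), mul_comm]
    congr 3 <;> ring
  rw [← hvol, ← hmp.measure_preimage hB.nullMeasurableSet]
  refine measure_mono ?_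
  rintro x ⟨hx, h1, h2⟩ i -
  refine Fin.cases ?_ (fun j => ?_) i
  · simp only [Function.comp, B, Fin.cons_zero, e.repr_apply_apply, he0]
    exact ⟨h1, h2⟩
  · simp only [Function.comp, B, Fin.cons_succ, e.repr_apply_apply]
    have := abs_real_inner_le_norm (e j.succ) x
    rw [e.orthonormal.1, one_mul] at this
    exact abs_le.1 (this.trans hx)
end

section
/- Let n ≥ 1, let w ∈ EuclideanSpace ℝ (Fin n) with ‖w‖ = 1, and let b, a ∈ ℝ. Let μ be the uniform probability measure on the closed unit ball of EuclideanSpace ℝ (Fin n) (Lebesgue measure restricted to the ball, normalized by the ball's volume π^(n/2)/Γ(n/2 + 1)). Then, writing v(x) = ⟪w, x⟫ + b, one has μ {x : (0 ≤ v(x) ∧ v(x) + a < 0) ∨ (v(x) < 0 ∧ 0 ≤ v(x) + a)} ≤ C · |a|, where C = 2^(n-1) · Γ(n/2 + 1) / π^(n/2). -/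
open RealInnerProductSpace MeasureTheory

theorem score_function_bound
    {n : ℕ} (hn : 1 ≤ n)
    (w : EuclideanSpace ℝ (Fin n)) (hw : ‖w‖ = 1) (b a : ℝ)
    (μ : Measure (EuclideanSpace ℝ (Fin n)))
    (hμ : μ = (ENNReal.ofReal (Real.pi ^ ((n : ℝ) / 2) / Real.Gamma ((n : ℝ) / 2 + 1)))⁻¹ •
            volume.restrict (Metric.closedBall (0 : EuclideanSpace ℝ (Fin n)) 1))
    (v : EuclideanSpace ℝ (Fin n) → ℝ) (hv : ∀ x, v x = ⟪w, x⟫ + b)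
    (C : ℝ) (hC : C = 2 ^ (n - 1) * Real.Gamma ((n : ℝ) / 2 + 1) / Real.pi ^ ((n : ℝ) / 2)) :
    μ {x | (0 ≤ v x ∧ v x + a < 0) ∨ (v x < 0 ∧ 0 ≤ v x + a)}
      ≤ ENNReal.ofReal (C * |a|) := by
  obtain ⟨i₀⟩ : Nonempty (Fin n) := ⟨⟨0, hn⟩⟩
  have hort : Orthonormal ℝ (({i₀} : Set (Fin n)).domRestrict (fun _ => w)) := by
    rw [orthonormal_iff_ite]
    rintro ⟨i, hi⟩ ⟨j, hj⟩
    rw [Set.mem_singleton_iff] at hi hj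
    subst hi
    subst hj
    simp [Set.domRestrict, hw]
  obtain ⟨B, hB⟩ := hort.exists_orthonormalBasis_extension_of_card_eq (by simp)
  have hB0 : B i₀ = w := hB i₀ rfl
  let I : Fin n → Set ℝ := fun i => if i = i₀ then Set.uIcc (-b) (-a - b) else Set.Icc (-1) 1
  have hmp : MeasurePreserving (fun x => WithLp.ofLp (B.repr x)) volume volume :=
    (PiLp.volume_preserving_ofLp (Fin n)).comp B.measurePreserving_repr
  have hI : MeasurableSet (Set.univ.pi I) := by
    refine MeasurableSet.univ_pi fun i => ?_
    dsimp only [I]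
    split_ifs
    · exact measurableSet_uIcc
    · exact measurableSet_Icc
  have hvol : volume (Set.univ.pi I) = ENNReal.ofReal (2 ^ (n - 1) * |a|) := by
    rw [volume_pi_pi, ← Finset.mul_prod_erase _ _ (Finset.mem_univ i₀)]
    have h1 : volume (I i₀) = ENNReal.ofReal |a| := by
      simp only [I, if_true, Real.volume_interval]
      congr 1
      rw [← abs_neg]
      congr 1
      ring
    have h2 : ∀ i ∈ Finset.univ.erase i₀, volume (I i) = ENNReal.ofReal 2 := by
      intro i hi
      simp only [I, if_neg (Finset.ne_of_mem_erase hi), Real.volume_Icc]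
      norm_num
    rw [Finset.prod_congr rfl h2, h1, Finset.prod_const, Finset.card_erase_of_mem (Finset.mem_univ _),
      Finset.card_univ, Fintype.card_fin, ← ENNReal.ofReal_pow (by norm_num),
      ← ENNReal.ofReal_mul (abs_nonneg a), mul_comm]
  have key : (volume.restrict (Metric.closedBall (0 : EuclideanSpace ℝ (Fin n)) 1))
      {x | (0 ≤ v x ∧ v x + a < 0) ∨ (v x < 0 ∧ 0 ≤ v x + a)}
      ≤ ENNReal.ofReal (2 ^ (n - 1) * |a|) := by
    rw [← hvol, ← hmp.measure_preimage hI.nullMeasurableSet,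
      Measure.restrict_apply' measurableSet_closedBall]
    refine measure_mono ?_
    rintro x ⟨hx, hxb⟩
    rw [Set.mem_preimage, Set.mem_univ_pi]
    intro i
    by_cases hi : i = i₀
    · subst hi
      simp only [I, if_true, B.repr_apply_apply, hB0]
      simp only [Set.mem_ofPred_eq, hv] at hx
      rw [Set.mem_uIcc]
      rcases hx with ⟨h1, h2⟩ | ⟨h1, h2⟩
      · left; constructor <;> linarith
      · right; constructor <;> linarith
    · simp only [I, if_neg hi, B.repr_apply_apply]
      rw [Set.mem_Icc, ← abs_le]
      refine (abs_real_inner_le_norm _ _).trans ?_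
      rw [B.norm_eq_one, one_mul]
      simpa using hxb
  have hpi : 0 < Real.pi ^ ((n : ℝ) / 2) := Real.rpow_pos_of_pos Real.pi_pos _
  have hG : 0 < Real.Gamma ((n : ℝ) / 2 + 1) := Real.Gamma_pos_of_pos (by positivity)
  rw [hμ, Measure.smul_apply, smul_eq_mul, ← ENNReal.ofReal_inv_of_pos (div_pos hpi hG)]
  refine (mul_le_mul_right key _).trans ?_
  rw [← ENNReal.ofReal_mul (by positivity), hC]
  apply le_of_eq
  congr 1
  field_simp
end

section
/- Let θ₁, θ₂ ∈ ℝ with -1 ≤ θ₂ ≤ 1, -1 ≤ θ₁ ≤ 1 and θ₁ - θ₂ ≥ 1. Define h : ℝ × ℝ → ℤ on points (v, g) with g ∈ {0,1} by h(v, 0) = 1 if v ≥ θ₁ and -1 otherwise, and h(v, 1) = 1 if v ≥ θ₂ and -1 otherwise. Then h(-1, 0) = -1, h(θ₂, 1) = 1, and for every point (v, g) with g ∈ {0,1} and h(v, g) = 1, the Euclidean distance from (-1, 0) to (θ₂, 1) is at most the Euclidean distance from (-1, 0) to (v, g); i.e., (θ₂, 1) is a closest point to (-1, 0) among points labeled differently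 from (-1, 0). -/
theorem extended_threshold_counterfactual_case_far
    (θ₁ θ₂ : ℝ) (h2l : -1 ≤ θ₂) (h2u : θ₂ ≤ 1) (h1l : -1 ≤ θ₁) (h1u : θ₁ ≤ 1)
    (hfar : θ₁ - θ₂ ≥ 1)
    (h : ℝ → ℝ → ℤ)
    (hh0 : ∀ v : ℝ, h v 0 = if θ₁ ≤ v then 1 else -1)
    (hh1 : ∀ v : ℝ, h v 1 = if θ₂ ≤ v then 1 else -1) :
    h (-1) 0 = -1 ∧ h θ₂ 1 = 1 ∧
    ∀ v g : ℝ, (g = 0 ∨ g = 1) → h v g = 1 →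
      Real.sqrt ((θ₂ - (-1)) ^ 2 + (1 - 0) ^ 2)
        ≤ Real.sqrt ((v - (-1)) ^ 2 + (g - 0) ^ 2) := by
  refine ⟨?_, ?_, ?_⟩
  · rw [hh0, if_neg (by linarith)]
  · rw [hh1, if_pos le_rfl]
  · rintro v g (rfl | rfl) hv
    · rw [hh0] at hv
      have hle : θ₁ ≤ v := by
        by_contra hc
        rw [if_neg hc] at hv
        norm_num at hv
      apply Real.sqrt_le_sqrt
      nlinarith [mul_nonneg (by linarith : (0:ℝ) ≤ v - θ₂ - 1) (by linarith : (0:ℝ) ≤ v + θ₂ + 3)]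
    · rw [hh1] at hv
      have hle : θ₂ ≤ v := by
        by_contra hc
        rw [if_neg hc] at hv
        norm_num at hv
      apply Real.sqrt_le_sqrt
      nlinarith [mul_nonneg (by linarith : (0:ℝ) ≤ v - θ₂) (by linarith : (0:ℝ) ≤ v + θ₂ + 2)]
end
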